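/- Let Z_2 be the ring of 2-adic integers and S = Z_2[[x,y]]/(x^k − y^l − 2^m) with k, l, m > 2. Set u = (x^{k-2} y^{l-2})^{1/2} and v = 2^{-1}(x^{k-1} − u y) in an algebraic closure of Frac(S). Then v satisfies v^2 + u y v − x^{k-2} 2^{m-2} = 0; hence T = S[u, v] is a module-finite extension of S, and x^{k-1} = u y + 2v ∈ (y, 2)T, so x ∈ rad((y,2)T) ∩ integral relations, while x ∉ (y,2)S. Consequently S is not a direct summand of T as an S-module, i.e. S is not a splinter. -/

import Mathlib

open MvPowerSeries

/-- The ring `S = ℤ₂[[x,y]]/(x^k − y^l − 2^m)`. -/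
abbrev SinghRing (k l m : ℕ) : Type :=
  MvPowerSeries (Fin 2) ℤ_[2] ⧸
    (Ideal.span {(X 0 : MvPowerSeries (Fin 2) ℤ_[2]) ^ k - X 1 ^ l - 2 ^ m})

/-- The image of `x` in `S`. -/
noncomputable def singhX (k l m : ℕ) : SinghRing k l m :=
  Ideal.Quotient.mk _ (X 0)

/-- The image of `y` in `S`. -/
noncomputable def singhY (k l m : ℕ) : SinghRing k l m :=
  Ideal.Quotient.mk _ (X 1)

/-- The module-finite extension `T = S[u,v]` of `S`, where `u = (x^{k-2}y^{l-2})^{1/2}`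
and `v = 2⁻¹(x^{k-1} − uy)`, so that `v² + uyv − x^{k-2}2^{m-2} = 0`. -/
structure SinghExt (k l m : ℕ) where
  T : Type
  [commRing : CommRing T]
  [isDomain : IsDomain T]
  [alg : Algebra (SinghRing k l m) T]
  inj : Function.Injective (algebraMap (SinghRing k l m) T)
  fin : Module.Finite (SinghRing k l m) T
  u : T
  v : T
  hu : u ^ 2 = algebraMap _ T (singhX k l m) ^ (k - 2) *
    algebraMap _ T (singhY k l m) ^ (l - 2)
  hv : 2 * v = algebraMap _ T (singhX k l m) ^ (k - 1) - u * algebraMap _ T (singhY k l m)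
  hquad : v ^ 2 + u * algebraMap _ T (singhY k l m) * v -
    algebraMap _ T (singhX k l m) ^ (k - 2) * 2 ^ (m - 2) = 0
  hadj : Algebra.adjoin (SinghRing k l m) {u, v} = ⊤
  hxk : algebraMap _ T (singhX k l m) ^ (k - 1) ∈
    Ideal.span {algebraMap _ T (singhY k l m), (2 : T)}

attribute [instance] SinghExt.commRing SinghExt.isDomain SinghExt.alg

theorem singh_aux_ndvd (l m n : ℕ) (hl : 2 < l) (hm : 2 < m) :
    ¬ (PowerSeries.X ^ l + 2 ^ m : PowerSeries ℤ_[2]) ∣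
      ((l : PowerSeries ℤ_[2]) * PowerSeries.X) ^ n := by
  have h2 : Prime (2 : ℤ_[2]) := by exact_mod_cast PadicInt.prime_p (p := 2)
  have hC2 : (2 : PowerSeries ℤ_[2]) ^ m = PowerSeries.C ((2 : ℤ_[2]) ^ m) := by rw [map_pow, map_ofNat]
  have hX : ¬ (PowerSeries.X : PowerSeries ℤ_[2]) ∣ PowerSeries.X ^ l + 2 ^ m := by
    rw [PowerSeries.X_dvd_iff, hC2]
    simp [show l ≠ 0 by omega]
  rintro ⟨g, hg⟩
  have h1 : (PowerSeries.X : PowerSeries ℤ_[2]) ^ n ∣ g := by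
    refine (PowerSeries.X_prime).pow_dvd_of_dvd_mul_left n hX ?_
    rw [← hg, mul_pow]
    exact Dvd.intro_left _ rfl
  obtain ⟨h, rfl⟩ := h1
  have h3 : (l : PowerSeries ℤ_[2]) ^ n = (PowerSeries.X ^ l + 2 ^ m) * h := by
    have : (PowerSeries.X : PowerSeries ℤ_[2]) ^ n ≠ 0 := pow_ne_zero _ PowerSeries.X_ne_zero
    apply mul_right_cancel₀ this
    rw [← mul_pow, hg]; ring
  have hCl : (l : PowerSeries ℤ_[2]) ^ n = PowerSeries.C ((l : ℤ_[2]) ^ n) := by simp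
  rw [hCl, hC2, add_mul] at h3
  have hrec : ∀ i, PowerSeries.coeff i h = - (2 ^ m * PowerSeries.coeff (i + l) h) := by
    intro i
    have := congrArg (PowerSeries.coeff (i + l)) h3
    rw [PowerSeries.coeff_C, if_neg (by omega), map_add, PowerSeries.coeff_X_pow_mul,
      PowerSeries.coeff_C_mul] at this
    linear_combination -this
  have hdiv : ∀ j i, (2 : ℤ_[2]) ^ j ∣ PowerSeries.coeff i h := by
    intro j
    induction j with
    | zero => simp
    | succ j ih =>
      intro i
      rw [hrec i, dvd_neg, pow_succ, mul_comm]
      exact mul_dvd_mul (dvd_pow_self _ (by omega)) (ih _)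
  have h0 : PowerSeries.coeff 0 h = 0 := by
    by_contra hne
    have hf : FiniteMultiplicity (2 : ℤ_[2]) (PowerSeries.coeff 0 h) :=
      FiniteMultiplicity.of_prime_left h2 hne
    obtain ⟨N, hN⟩ := hf
    exact hN (hdiv _ 0)
  have := congrArg (PowerSeries.coeff 0) h3
  rw [map_add, PowerSeries.coeff_C_mul, h0] at this
  simp [show l ≠ 0 by omega] at this

theorem singh_aux_prime (k l m : ℕ) (hk : 2 < k) (hl : 2 < l) (hm : 2 < m) :
    Prime (Polynomial.X ^ k - Polynomial.C (PowerSeries.X ^ l + 2 ^ m : PowerSeries ℤ_[2])) := by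
  set c : PowerSeries ℤ_[2] := PowerSeries.X ^ l + 2 ^ m with hc
  have hdisj : Disjoint ((Ideal.span {c} : Ideal (PowerSeries ℤ_[2])) : Set (PowerSeries ℤ_[2]))
      (Submonoid.powers ((l : PowerSeries ℤ_[2]) * PowerSeries.X)) := by
    rw [Set.disjoint_right]
    rintro _ ⟨n, rfl⟩ hmem
    exact singh_aux_ndvd l m n hl hm (Ideal.mem_span_singleton.1 hmem)
  obtain ⟨P, hP, hcP, hPd⟩ := Ideal.exists_le_prime_disjoint _ _ hdisj
  have hcP : c ∈ P := hcP (Ideal.mem_span_singleton_self c)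
  have hlX : (l : PowerSeries ℤ_[2]) * PowerSeries.X ∉ P := fun h =>
    Set.disjoint_right.1 hPd (Submonoid.mem_powers _) h
  have hder : ∀ a ∈ P ^ 2, PowerSeries.derivative ℤ_[2] a ∈ P := by
    intro a ha
    rw [pow_two] at ha
    refine Submodule.mul_induction_on ha ?_ ?_
    · intro x hx y hy
      rw [Derivation.leibniz]
      exact P.add_mem (P.mul_mem_right _ hx) (P.mul_mem_right _ hy)
    · intro x y hx hy
      rw [map_add]; exact P.add_mem hx hy
  have hc2 : c ∉ P ^ 2 := by
    intro h
    have h1 := hder c h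
    have h2 : PowerSeries.derivative ℤ_[2] c
        = (l : PowerSeries ℤ_[2]) * PowerSeries.X ^ (l - 1) := by
      have hC2 : (2 : PowerSeries ℤ_[2]) ^ m = PowerSeries.C ((2 : ℤ_[2]) ^ m) := by rw [map_pow, map_ofNat]
      rw [hc, hC2, map_add, Derivation.leibniz_pow]
      simp [PowerSeries.derivative_C, PowerSeries.derivative_X]
    rw [h2] at h1
    rcases hP.mem_or_mem h1 with h | h
    · exact hlX (P.mul_mem_right _ h)
    · exact hlX (P.mul_mem_left _ (hP.mem_of_pow_mem _ h))
  have hmon : (Polynomial.X ^ k - Polynomial.C c).Monic :=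
    Polynomial.monic_X_pow_sub_C c (by omega)
  have hdeg : (Polynomial.X ^ k - Polynomial.C c).natDegree = k :=
    Polynomial.natDegree_X_pow_sub_C
  have hE : (Polynomial.X ^ k - Polynomial.C c).IsEisensteinAt P := by
    refine ⟨?_, ?_, ?_⟩
    · rw [hmon.leadingCoeff]
      exact fun h => hP.ne_top ((Ideal.eq_top_iff_one _).2 h)
    · intro n hn
      rw [hdeg] at hn
      rw [Polynomial.coeff_sub, Polynomial.coeff_X_pow, if_neg (by omega), zero_sub,
        Polynomial.coeff_C]
      split_ifs
      · exact P.neg_mem hcP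
      · simp
    · rw [Polynomial.coeff_sub, Polynomial.coeff_X_pow, if_neg (by omega), zero_sub,
        Polynomial.coeff_C_zero]
      rwa [neg_mem_iff]
  exact (hE.irreducible hP hmon.isPrimitive (by omega)).prime

open scoped PowerSeries.WithPiTopology in
theorem singh_aux_complete (c : PowerSeries ℤ_[2]) (hc : ¬ IsUnit c) :
    IsAdicComplete (Ideal.span {c}) (PowerSeries ℤ_[2]) := by
  have hne : Ideal.span {c} ≠ ⊤ := by rwa [Ne, Ideal.span_singleton_eq_top]
  have : IsHausdorff (Ideal.span {c}) (PowerSeries ℤ_[2]) := IsHausdorff.of_isDomain _ hne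
  have : CompactSpace (PowerSeries ℤ_[2]) :=
    inferInstanceAs (CompactSpace ((Unit →₀ ℕ) → ℤ_[2]))
  have : T2Space (PowerSeries ℤ_[2]) := inferInstance
  have key : ∀ n (a b : PowerSeries ℤ_[2]),
      a ≡ b [SMOD ((Ideal.span {c}) ^ n • ⊤ : Submodule (PowerSeries ℤ_[2]) (PowerSeries ℤ_[2]))] ↔
        ∃ r, b + c ^ n * r = a := by
    intro n a b
    rw [SModEq.sub_mem, smul_eq_mul, Ideal.mul_top, Ideal.span_singleton_pow,
      Ideal.mem_span_singleton]
    constructor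
    · rintro ⟨r, hr⟩; exact ⟨r, by rw [← hr]; ring⟩
    · rintro ⟨r, rfl⟩; exact ⟨r, by ring⟩
  have : IsPrecomplete (Ideal.span {c}) (PowerSeries ℤ_[2]) := by
    constructor
    intro f hf
    let K : ℕ → Set (PowerSeries ℤ_[2]) := fun n => Set.range fun r => f n + c ^ n * r
    have hcont : ∀ n, Continuous fun r : PowerSeries ℤ_[2] => f n + c ^ n * r := by
      intro n; fun_prop
    have hK : ∀ n, IsCompact (K n) := fun n => isCompact_range (hcont n)
    obtain ⟨L, hL⟩ := IsCompact.nonempty_iInter_of_sequence_nonempty_isCompact_isClosed K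
      (by
        rintro n _ ⟨r, rfl⟩
        obtain ⟨s, hs⟩ := (key n _ _).1 (hf (Nat.le_succ n)).symm
        exact ⟨s + c * r, by simp only [← hs]; ring⟩)
      (fun n => Set.range_nonempty _) (hK 0) (fun n => (hK n).isClosed)
    refine ⟨L, fun n => ?_⟩
    obtain ⟨r, hr⟩ := Set.mem_iInter.1 hL n
    exact ((key n _ _).2 ⟨r, hr⟩).symm
  exact {}

theorem singh_aux_domain {A : Type*} [CommRing A] [IsDomain A] (g : Polynomial A) (I : Ideal A)
    [IsAdicComplete I A] (hg : g.IsDistinguishedAt I) (hp : Prime g) :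
    IsDomain (PowerSeries A ⧸ Ideal.span {(g : PowerSeries A)}) := by
  have : (Ideal.span {g}).IsPrime := (Ideal.span_singleton_prime hp.ne_zero).2 hp
  exact hg.algEquivQuotient.symm.toMulEquiv.isDomain _

theorem singh_isDomain (k l m : ℕ) (hk : 2 < k) (hl : 2 < l) (hm : 2 < m) :
    IsDomain (SinghRing k l m) := by
  set c : PowerSeries ℤ_[2] := PowerSeries.X ^ l + 2 ^ m with hc
  have hp := singh_aux_prime k l m hk hl hm
  have hcu : ¬ IsUnit c := by
    intro h
    have h2 : Prime (2 : ℤ_[2]) := by exact_mod_cast PadicInt.prime_p (p := 2)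
    have := h.map (PowerSeries.constantCoeff (R := ℤ_[2]))
    rw [hc] at this
    simp only [map_add, map_pow, PowerSeries.constantCoeff_X, map_ofNat,
      zero_pow (show l ≠ 0 by omega), zero_add] at this
    exact h2.not_isUnit ((isUnit_pow_iff (by omega)).1 this)
  have := singh_aux_complete c hcu
  have hdist : (Polynomial.X ^ k - Polynomial.C c).IsDistinguishedAt (Ideal.span {c}) := by
    refine ⟨⟨?_⟩, Polynomial.monic_X_pow_sub_C c (by omega)⟩
    intro n hn
    rw [Polynomial.natDegree_X_pow_sub_C] at hn
    rw [Polynomial.coeff_sub, Polynomial.coeff_X_pow, if_neg (by omega), zero_sub,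
        Polynomial.coeff_C]
    split_ifs
    · exact neg_mem (Ideal.mem_span_singleton_self c)
    · simp
  have : IsDomain (PowerSeries (PowerSeries ℤ_[2]) ⧸
      Ideal.span {((Polynomial.X ^ k - Polynomial.C c : Polynomial (PowerSeries ℤ_[2])) :
        PowerSeries (PowerSeries ℤ_[2]))}) := singh_aux_domain _ _ hdist hp
  let ε : Fin 2 ≃ Option Unit :=
    (_root_.finSuccEquiv 1).trans (Equiv.optionCongr (Equiv.ofUnique (Fin 1) Unit))
  let e2 : MvPowerSeries (Fin 2) ℤ_[2] ≃ₐ[ℤ_[2]] PowerSeries (PowerSeries ℤ_[2]) :=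
    (MvPowerSeries.renameEquiv ℤ_[2] ε).trans (MvPowerSeries.optionEquivLeft Unit ℤ_[2])
  have hx : e2 (X 0) = PowerSeries.X := by
    change MvPowerSeries.optionEquivLeft Unit ℤ_[2] (MvPowerSeries.rename ε (X _)) = _
    rw [MvPowerSeries.rename_X]
    exact MvPowerSeries.optionEquivLeft_X_none
  have hy : e2 (X 1) = PowerSeries.C (PowerSeries.X : PowerSeries ℤ_[2]) := by
    change MvPowerSeries.optionEquivLeft Unit ℤ_[2] (MvPowerSeries.rename ε (X _)) = _
    rw [MvPowerSeries.rename_X]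
    exact MvPowerSeries.optionEquivLeft_X_some ()
  have hf : e2 ((X 0 : MvPowerSeries (Fin 2) ℤ_[2]) ^ k - X 1 ^ l - 2 ^ m) =
      ((Polynomial.X ^ k - Polynomial.C c : Polynomial (PowerSeries ℤ_[2])) :
        PowerSeries (PowerSeries ℤ_[2])) := by
    rw [map_sub, map_sub, map_pow, map_pow, map_pow, hx, hy, map_ofNat, hc]
    rw [sub_sub, Polynomial.coe_sub, Polynomial.coe_pow, Polynomial.coe_X, Polynomial.coe_C,
      map_add, map_pow, map_pow, map_ofNat]
  have e3 := Ideal.quotientEquiv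
    (Ideal.span {(X 0 : MvPowerSeries (Fin 2) ℤ_[2]) ^ k - X 1 ^ l - 2 ^ m})
    (Ideal.span {((Polynomial.X ^ k - Polynomial.C c : Polynomial (PowerSeries ℤ_[2])) :
        PowerSeries (PowerSeries ℤ_[2]))}) e2.toRingEquiv (by
      rw [Ideal.map_span, Set.image_singleton, ← hf]; rfl)
  exact e3.toMulEquiv.isDomain _

theorem singh_pow_notMem (k l m j : ℕ) (hl : 2 < l) (hm : 2 < m) (hj : j < k) :
    singhX k l m ^ j ∉ Ideal.span {singhY k l m, (2 : SinghRing k l m)} := by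
  intro h
  obtain ⟨a, b, hab⟩ := Ideal.mem_span_pair.1 h
  obtain ⟨a, rfl⟩ := Ideal.Quotient.mk_surjective a
  obtain ⟨b, rfl⟩ := Ideal.Quotient.mk_surjective b
  have h2 : Prime (2 : ℤ_[2]) := by exact_mod_cast PadicInt.prime_p (p := 2)
  have hab' : (Ideal.Quotient.mk (Ideal.span
      {(X 0 : MvPowerSeries (Fin 2) ℤ_[2]) ^ k - X 1 ^ l - 2 ^ m})) (a * X 1 + b * 2)
      = Ideal.Quotient.mk _ (X 0 ^ j) := by
    rw [map_add, map_mul, map_mul, map_pow, map_ofNat]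
    exact hab
  rw [Ideal.Quotient.eq, Ideal.mem_span_singleton] at hab'
  obtain ⟨g, hg⟩ := hab'
  have h3 : (X 0 : MvPowerSeries (Fin 2) ℤ_[2]) ^ j =
      X 1 * (a + g * X 1 ^ (l - 1)) - X 0 ^ k * g + C 2 * (b + C (2 ^ (m - 1)) * g) := by
    obtain ⟨l, rfl⟩ : ∃ l', l = l' + 1 := ⟨l - 1, by omega⟩
    obtain ⟨m, rfl⟩ : ∃ l', m = l' + 1 := ⟨m - 1, by omega⟩
    simp only [Nat.add_sub_cancel, map_pow, map_ofNat]
    linear_combination -hg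
  have h4 := congrArg (coeff (Finsupp.single (0 : Fin 2) j)) h3
  have z1 : coeff (Finsupp.single (0 : Fin 2) j) (X 1 * (a + g * X 1 ^ (l - 1))) = 0 :=
    X_dvd_iff.1 (Dvd.intro _ rfl) _ (by simp)
  have z2 : coeff (Finsupp.single (0 : Fin 2) j) (X 0 ^ k * g) = 0 :=
    X_pow_dvd_iff.1 (Dvd.intro _ rfl) _ (by simpa using hj)
  rw [map_add, map_sub, z1, z2, coeff_C_mul, coeff_X_pow, if_pos rfl, sub_zero, zero_add] at h4
  exact h2.not_isUnit (IsUnit.of_mul_eq_one _ h4.symm)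

theorem singh_ext_core {S : Type} [CommRing S] [IsDomain S] (k l m : ℕ)
    (hk : 2 < k) (hl : 2 < l) (hm : 2 < m) (h2S : (2 : S) ≠ 0) (x₀ y₀ : S)
    (hrel : x₀ ^ k - y₀ ^ l = 2 ^ m) :
    ∃ (T : Type) (_ : CommRing T) (_ : IsDomain T) (_ : Algebra S T)
      (_ : Function.Injective (algebraMap S T)) (_ : Module.Finite S T) (u v : T)
      (_ : u ^ 2 = algebraMap S T x₀ ^ (k - 2) * algebraMap S T y₀ ^ (l - 2))
      (_ : 2 * v = algebraMap S T x₀ ^ (k - 1) - u * algebraMap S T y₀)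
      (_ : v ^ 2 + u * algebraMap S T y₀ * v - algebraMap S T x₀ ^ (k - 2) * 2 ^ (m - 2) = 0)
      (_ : Algebra.adjoin S {u, v} = ⊤),
      algebraMap S T x₀ ^ (k - 1) ∈ Ideal.span {algebraMap S T y₀, (2 : T)} := by
  let Ω := AlgebraicClosure (FractionRing S)
  have hinj : Function.Injective (algebraMap S Ω) := by
    rw [IsScalarTower.algebraMap_eq S (FractionRing S) Ω]
    exact (algebraMap (FractionRing S) Ω).injective.comp (IsFractionRing.injective S _)
  have h2Ω : (2 : Ω) ≠ 0 := by
    intro h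
    apply h2S
    apply hinj
    rw [map_ofNat, map_zero]; exact h
  set x : Ω := algebraMap S Ω (x₀) with hx
  set y : Ω := algebraMap S Ω (y₀) with hy
  have hxy : x ^ k - y ^ l = 2 ^ m := by
    rw [hx, hy, ← map_pow, ← map_pow, ← map_sub, hrel, map_pow, map_ofNat]
  obtain ⟨u, hu⟩ := IsAlgClosed.exists_pow_nat_eq (x ^ (k - 2) * y ^ (l - 2)) (n := 2) (by omega)
  obtain ⟨v, hv⟩ : ∃ v : Ω, 2 * v = x ^ (k - 1) - u * y :=
    ⟨(x ^ (k - 1) - u * y) / 2, mul_div_cancel₀ _ h2Ω⟩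
  have hquad : v ^ 2 + u * y * v - x ^ (k - 2) * 2 ^ (m - 2) = 0 := by
    obtain ⟨k, rfl⟩ : ∃ k', k = k' + 2 := ⟨k - 2, by omega⟩
    obtain ⟨l, rfl⟩ : ∃ k', l = k' + 2 := ⟨l - 2, by omega⟩
    obtain ⟨m, rfl⟩ : ∃ k', m = k' + 2 := ⟨m - 2, by omega⟩
    simp only [Nat.add_sub_cancel, show k + 2 - 1 = k + 1 by omega] at *
    have h4 : (2 : Ω) ^ 2 ≠ 0 := pow_ne_zero _ h2Ω
    apply mul_left_cancel₀ h4
    linear_combination (2 * v + x ^ (k + 1) + u * y) * hv - y ^ 2 * hu + x ^ k * hxy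
  have hxi : IsIntegral S x := isIntegral_algebraMap
  have hyi : IsIntegral S y := isIntegral_algebraMap
  have hui : IsIntegral S u := by
    apply IsIntegral.of_pow (n := 2) (by omega)
    rw [hu]; exact (hxi.pow _).mul (hyi.pow _)
  have hvi : IsIntegral S v := by
    have h2i : IsIntegral S (2 : Ω) := by
      have := isIntegral_algebraMap (R := S) (A := Ω) (x := 2)
      rwa [map_ofNat] at this
    have : IsIntegral (integralClosure S Ω) v := by
      refine ⟨Polynomial.X ^ 2 + (Polynomial.C ⟨u * y, hui.mul hyi⟩ * Polynomial.X -
        Polynomial.C ⟨x ^ (k - 2) * 2 ^ (m - 2), (hxi.pow _).mul (h2i.pow _)⟩), ?_, ?_⟩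
      · apply Polynomial.monic_X_pow_add
        compute_degree!
      · rw [← hquad]
        simp only [Polynomial.eval₂_add, Polynomial.eval₂_sub, Polynomial.eval₂_mul,
          Polynomial.eval₂_C, Polynomial.eval₂_X, Polynomial.eval₂_pow]
        change v ^ 2 + (u * y * v - x ^ (k - 2) * 2 ^ (m - 2)) = _
        ring
    exact isIntegral_trans v this
  let T := Algebra.adjoin S ({u, v} : Set Ω)
  have huT : u ∈ T := Algebra.subset_adjoin (by simp)
  have hvT : v ∈ T := Algebra.subset_adjoin (by simp)
  have hvT' : (2 : T) * ⟨v, hvT⟩ = algebraMap S T (x₀) ^ (k - 1) -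
      ⟨u, huT⟩ * algebraMap S T (y₀) := Subtype.ext hv
  refine ⟨T, inferInstance, inferInstance, inferInstance, fun a b h => hinj (congrArg Subtype.val h),
    ?_, ⟨u, huT⟩, ⟨v, hvT⟩, Subtype.ext hu, hvT', Subtype.ext hquad, ?_, ?_⟩
  · have := fg_adjoin_of_finite (R := S) (s := ({u, v} : Set Ω)) (Set.toFinite _) (by
      rintro z (rfl | rfl)
      · exact hui
      · exact hvi)
    exact Module.Finite.iff_fg.2 this
  · have := Algebra.adjoin_adjoin_coe_preimage (R := S) (s := ({u, v} : Set Ω))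
    rw [← this]
    congr 1
    ext ⟨z, hz⟩
    simp [Subtype.ext_iff]
  · rw [Ideal.mem_span_pair]
    exact ⟨⟨u, huT⟩, ⟨v, hvT⟩, by linear_combination hvT'⟩


theorem singh_ext_exists (k l m : ℕ) (hk : 2 < k) (hl : 2 < l) (hm : 2 < m) :
    Nonempty (SinghExt k l m) := by
  have := singh_isDomain k l m hk hl hm
  have h2S : (2 : SinghRing k l m) ≠ 0 := by
    intro h
    have h2 : Prime (2 : ℤ_[2]) := by exact_mod_cast PadicInt.prime_p (p := 2)
    have h' : (Ideal.Quotient.mk (Ideal.span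
      {(X 0 : MvPowerSeries (Fin 2) ℤ_[2]) ^ k - X 1 ^ l - 2 ^ m})) 2 = 0 := by
      rw [map_ofNat]; exact h
    rw [Ideal.Quotient.eq_zero_iff_mem, Ideal.mem_span_singleton] at h'
    have h3 := map_dvd (MvPowerSeries.constantCoeff (R := ℤ_[2])) h'
    simp only [map_sub, map_pow, MvPowerSeries.constantCoeff_X, map_ofNat,
      zero_pow (show l ≠ 0 by omega), zero_pow (show k ≠ 0 by omega), sub_self, zero_sub,
      neg_dvd] at h3
    have h4 : (2 : ℤ_[2]) ^ 2 ∣ 2 ^ 1 := by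
      rw [pow_one]; exact (pow_dvd_pow 2 (by omega)).trans h3
    have := (pow_dvd_pow_iff h2.ne_zero h2.not_isUnit).1 h4
    omega
  have hrel : singhX k l m ^ k - singhY k l m ^ l = 2 ^ m := by
    rw [← sub_eq_zero]
    have : (Ideal.Quotient.mk (Ideal.span
      {(X 0 : MvPowerSeries (Fin 2) ℤ_[2]) ^ k - X 1 ^ l - 2 ^ m}))
        (X 0 ^ k - X 1 ^ l - 2 ^ m) = 0 :=
      Ideal.Quotient.eq_zero_iff_mem.2 (Ideal.mem_span_singleton_self _)
    rw [map_sub, map_sub, map_pow, map_pow, map_pow, map_ofNat] at this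
    exact this
  obtain ⟨T, _, _, _, h1, h2, u, v, h3, h4, h5, h6, h7⟩ :=
    singh_ext_core k l m hk hl hm h2S _ _ hrel
  exact ⟨⟨T, h1, h2, u, v, h3, h4, h5, h6, h7⟩⟩

/-- For `k, l, m > 2`, in `S = ℤ₂[[x,y]]/(x^k − y^l − 2^m)` one has `x ∉ (y,2)S`, and
there is a module-finite extension domain `T = S[u,v]` with `x^{k-1} = uy + 2v ∈ (y,2)T`
of which `S` is not a direct summand as an `S`-module; consequently `S` is not a
splinter. -/
theorem singh_not_splinter (k l m : ℕ) (hk : 2 < k) (hl : 2 < l) (hm : 2 < m) :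
    singhX k l m ∉ Ideal.span {singhY k l m, (2 : SinghRing k l m)} ∧
    ∃ E : SinghExt k l m,
      ¬ ∃ φ : E.T →ₗ[SinghRing k l m] SinghRing k l m,
        φ.comp (Algebra.linearMap (SinghRing k l m) E.T) = LinearMap.id := by
  refine ⟨by simpa using singh_pow_notMem k l m 1 hl hm (by omega), ?_⟩
  obtain ⟨E⟩ := singh_ext_exists k l m hk hl hm
  refine ⟨E, ?_⟩
  rintro ⟨φ, hφ⟩
  have hφ' : ∀ s, φ (algebraMap _ E.T s) = s := fun s => LinearMap.congr_fun hφ s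
  refine singh_pow_notMem k l m (k - 1) hl hm (by omega) ?_
  have h : algebraMap _ E.T (singhX k l m ^ (k - 1)) =
      singhY k l m • E.u + (2 : SinghRing k l m) • E.v := by
    rw [Algebra.smul_def, Algebra.smul_def, map_pow, map_ofNat]
    linear_combination -E.hv
  have h1 := congrArg φ h
  rw [hφ', map_add, map_smul, map_smul] at h1
  rw [h1, Ideal.mem_span_pair]
  exact ⟨φ E.u, φ E.v, by simp only [smul_eq_mul]; ring⟩
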